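/- arXiv:2505.16414 — 2 statements merged into one kernel-verified Lean document; each statement's English description precedes it below -/
import Mathlib

section
/- Pohozaev identity on a disc in ℝ². Let δ > 0, ρ ∈ ℝ, and let u, h₁, h₂ be C² functions on an open neighborhood of the closed ball {x ∈ ℝ² : ‖x‖ ≤ δ} satisfying -Δu(x) = ρ·h₁(x)·e^{u(x)} - ρ·h₂(x)·e^{-u(x)} for all x in the open ball B_δ(0). Then -δ·∫_{∂B_δ(0)} ((∂u/∂n)² - ½‖∇u‖²) dS = ρ·δ·∫_{∂B_δ(0)} h₁·e^{u} dS - ρ·∫_{B_δ(0)} (2·h₁(x)·e^{u(x)} + (x·∇h₁(x))·e^{u(x)}) dx + ρ·δ·∫_{∂B_δ(0)} h₂·e^{-u} dS - ρ·∫_{B_δ(0)} (2·h₂(x)·e^{-u(x)} + (x·∇h₂(x))·e^{-u(x)}) dx. -/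
open MeasureTheory
open scoped Real RealInnerProductSpace

/-- The Euclidean plane. -/
abbrev E2 : Type := EuclideanSpace ℝ (Fin 2)

/-- The Euclidean Laplacian `Δf = ∂²f/∂x₁² + ∂²f/∂x₂²` on `ℝ²`. -/
noncomputable def laplacian (f : E2 → ℝ) (x : E2) : ℝ :=
  ∑ i : Fin 2,
    fderiv ℝ (fun y => fderiv ℝ f y (EuclideanSpace.single i 1)) x (EuclideanSpace.single i 1)

/-!
Apply the divergence theorem on the disc to the field `V = (x · ∇u) ∇u - ½ ‖∇u‖² x`. In the plane
`div V = (x · ∇u) Δu`, the terms in `‖∇u‖²` cancelling precisely because the dimension is two, while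
on the circle `V · n = δ ((∂u/∂n)² - ½ ‖∇u‖²)`. The equation turns `(x · ∇u) Δu` into
`-ρ h₁ e^u (x · ∇u) - ρ h₂ e^{-u} (x · ∇(-u))`, and a product `h e^v (x · ∇v)` is integrated by
applying the divergence theorem again, to the field `h e^v x`.

The divergence theorem on the disc is the one on a rectangle in polar coordinates. The integral over
the circle for the Hausdorff measure becomes an angular integral because a map whose derivative
scales all lengths by `r` is, on countably many small pieces, bi-Lipschitz with constants `r ± ε`.
-/

open Set Filter Metric Module Topology
open scoped NNReal ENNReal Gradient

section HausdorffMeasure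

theorem rpow_mul_hausdorffMeasure_le_of_mul_dist_le {X Y : Type*}
    [MetricSpace X] [MeasurableSpace X] [BorelSpace X]
    [MetricSpace Y] [MeasurableSpace Y] [BorelSpace Y]
    {f : X → Y} {s : Set X} {c : ℝ≥0} (hc : 0 < c)
    (hf : ∀ x ∈ s, ∀ y ∈ s, c * dist x y ≤ dist (f x) (f y)) {d : ℝ} (hd : 0 ≤ d) :
    (c : ℝ≥0∞) ^ d * μH[d] s ≤ μH[d] (f '' s) := by
  have hanti : AntilipschitzWith c⁻¹ (s.domRestrict f) := by
    refine AntilipschitzWith.of_le_mul_dist fun x y => ?_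
    rw [NNReal.coe_inv, ← div_eq_inv_mul, le_div_iff₀' (by exact_mod_cast hc)]
    exact hf x x.2 y y.2
  have hle := hanti.le_hausdorffMeasure_image hd univ
  rw [image_univ, range_domRestrict,
    ← isometry_subtype_coe.hausdorffMeasure_image (Or.inl hd), image_univ, Subtype.range_coe,
    ENNReal.coe_inv hc.ne', ENNReal.inv_rpow] at hle
  calc (c : ℝ≥0∞) ^ d * μH[d] s
      ≤ (c : ℝ≥0∞) ^ d * (((c : ℝ≥0∞) ^ d)⁻¹ * μH[d] (f '' s)) := by gcongr
    _ = μH[d] (f '' s) :=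
      ENNReal.mul_inv_cancel_left (by simp [hc.ne']) (ENNReal.rpow_ne_top_of_nonneg hd (by simp))

variable {E F : Type*} [NormedAddCommGroup E] [NormedSpace ℝ E] [MeasurableSpace E] [BorelSpace E]
  [NormedAddCommGroup F] [NormedSpace ℝ F] [MeasurableSpace F] [BorelSpace F]
  {f : E → F} {s : Set E} {r ε : ℝ≥0} {d : ℝ}

theorem hausdorffMeasure_image_mem_Icc_of_approximatesLinearOn {A : E →L[ℝ] F}
    (hf : ApproximatesLinearOn f A s ε) (hA : ∀ v, ‖A v‖ = r * ‖v‖) (hε : ε < r) (hd : 0 ≤ d) :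
    μH[d] (f '' s) ∈
      Icc (((r - ε : ℝ≥0) : ℝ≥0∞) ^ d * μH[d] s) (((r + ε : ℝ≥0) : ℝ≥0∞) ^ d * μH[d] s) := by
  have hdist : ∀ x ∈ s, ∀ y ∈ s, |dist (f x) (f y) - r * dist x y| ≤ ε * dist x y := by
    intro x hx y hy
    rw [dist_eq_norm, dist_eq_norm, ← hA]
    exact (abs_norm_sub_norm_le _ _).trans (hf x hx y hy)
  constructor
  · refine rpow_mul_hausdorffMeasure_le_of_mul_dist_le (tsub_pos_of_lt hε) (fun x hx y hy => ?_) hd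
    rw [NNReal.coe_sub hε.le]
    linarith [(abs_le.1 (hdist x hx y hy)).1]
  · have hlip : LipschitzOnWith (r + ε) f s := by
      refine LipschitzOnWith.of_dist_le_mul fun x hx y hy => ?_
      rw [NNReal.coe_add]
      linarith [(abs_le.1 (hdist x hx y hy)).2]
    exact hlip.hausdorffMeasure_image_le hd

variable [FiniteDimensional ℝ E] [SecondCountableTopology F] {f' : E → E →L[ℝ] F}

theorem hausdorffMeasure_image_mem_Icc_of_hasFDerivWithinAt (hs : MeasurableSet s)
    (hinj : InjOn f s) (hf : ∀ x ∈ s, HasFDerivWithinAt f (f' x) s x)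
    (hf' : ∀ x ∈ s, ∀ v, ‖f' x v‖ = r * ‖v‖) (hε₀ : 0 < ε) (hε : ε < r) (hd : 0 ≤ d) :
    μH[d] (f '' s) ∈
      Icc (((r - ε : ℝ≥0) : ℝ≥0∞) ^ d * μH[d] s) (((r + ε : ℝ≥0) : ℝ≥0∞) ^ d * μH[d] s) := by
  rcases s.eq_empty_or_nonempty with rfl | hne
  · simp
  have : ProperSpace E := FiniteDimensional.proper ℝ E
  obtain ⟨t, A, htd, htm, hst, happrox, hA⟩ :=
    exists_partition_approximatesLinearOn_of_hasFDerivWithinAt f s f' hf (fun _ => ε)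
      fun _ => hε₀.ne'
  have hpiece (n : ℕ) := hausdorffMeasure_image_mem_Icc_of_approximatesLinearOn (happrox n)
    (by obtain ⟨y, hy, hAy⟩ := hA hne n; exact hAy ▸ hf' y hy) hε hd
  have hs_eq : ⋃ n, s ∩ t n = s := by rw [← inter_iUnion, inter_eq_left.2 hst]
  have hdisj : Pairwise (Function.onFun Disjoint fun n => s ∩ t n) :=
    htd.mono fun _ _ h => h.mono inter_subset_right inter_subset_right
  have hs_sum : μH[d] s = ∑' n, μH[d] (s ∩ t n) := by
    rw [← measure_iUnion hdisj fun n => hs.inter (htm n), hs_eq]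
  have himage_sum : μH[d] (f '' s) = ∑' n, μH[d] (f '' (s ∩ t n)) := by
    rw [← measure_iUnion, ← image_iUnion, hs_eq]
    · exact fun m n hmn => (hdisj hmn).image hinj inter_subset_left inter_subset_left
    · exact fun n => (hs.inter (htm n)).image_of_continuousOn_injOn
        (fun x hx => (hf x hx.1).continuousWithinAt.mono inter_subset_left)
        (hinj.mono inter_subset_left)
  rw [himage_sum, hs_sum, ← ENNReal.tsum_mul_left, ← ENNReal.tsum_mul_left]
  exact ⟨ENNReal.tsum_le_tsum fun n => (hpiece n).1, ENNReal.tsum_le_tsum fun n => (hpiece n).2⟩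

theorem hausdorffMeasure_image_eq_of_hasFDerivWithinAt (hs : MeasurableSet s)
    (hinj : InjOn f s) (hf : ∀ x ∈ s, HasFDerivWithinAt f (f' x) s x)
    (hf' : ∀ x ∈ s, ∀ v, ‖f' x v‖ = r * ‖v‖) (hr : 0 < r) (hd : 0 ≤ d) :
    μH[d] (f '' s) = (r : ℝ≥0∞) ^ d * μH[d] s := by
  have htendsto {c : ℝ≥0 → ℝ≥0} (hc : Continuous c) (hc₀ : c 0 = r) :
      Tendsto (fun ε => (c ε : ℝ≥0∞) ^ d * μH[d] s) (𝓝[>] 0) (𝓝 ((r : ℝ≥0∞) ^ d * μH[d] s)) := by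
    refine ENNReal.Tendsto.mul_const ?_ (Or.inl (by simp [hr.ne']))
    have h : Continuous fun ε => (c ε : ℝ≥0∞) ^ d := by fun_prop
    simpa [hc₀] using (h.tendsto 0).mono_left nhdsWithin_le_nhds
  have hmem : ∀ᶠ ε : ℝ≥0 in 𝓝[>] 0, μH[d] (f '' s) ∈
      Icc (((r - ε : ℝ≥0) : ℝ≥0∞) ^ d * μH[d] s) (((r + ε : ℝ≥0) : ℝ≥0∞) ^ d * μH[d] s) := by
    filter_upwards [Ioo_mem_nhdsGT hr] with ε hε
    exact hausdorffMeasure_image_mem_Icc_of_hasFDerivWithinAt hs hinj hf hf' hε.1 hε.2 hd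
  exact le_antisymm
    (ge_of_tendsto (htendsto (continuous_const.add continuous_id) (add_zero r))
      (hmem.mono fun _ h => h.2))
    (le_of_tendsto (htendsto (continuous_const.sub continuous_id) (tsub_zero r))
      (hmem.mono fun _ h => h.1))

end HausdorffMeasure

section PolarCoordinates

/-- The radial unit vector `(cos θ, sin θ)` of polar coordinates. The point with polar coordinates
`(r, θ)` is `r • polarRadial θ`. -/
noncomputable def polarRadial (θ : ℝ) : E2 := !₂[Real.cos θ, Real.sin θ]

/-- The angular unit vector `(-sin θ, cos θ)` of polar coordinates, the derivative of
`polarRadial`. -/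
noncomputable def polarAngular (θ : ℝ) : E2 := !₂[-Real.sin θ, Real.cos θ]

theorem norm_polarRadial (θ : ℝ) : ‖polarRadial θ‖ = 1 := by
  simp [polarRadial, EuclideanSpace.norm_eq, Fin.sum_univ_two]

theorem norm_polarAngular (θ : ℝ) : ‖polarAngular θ‖ = 1 := by
  simp [polarAngular, EuclideanSpace.norm_eq, Fin.sum_univ_two]

theorem norm_smul_polarRadial {r : ℝ} (hr : 0 ≤ r) (θ : ℝ) : ‖r • polarRadial θ‖ = r := by
  rw [norm_smul, norm_polarRadial, mul_one, Real.norm_of_nonneg hr]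

theorem polarRadial_eq_smul_single (θ : ℝ) :
    polarRadial θ =
      Real.cos θ • EuclideanSpace.single 0 1 + Real.sin θ • EuclideanSpace.single 1 1 := by
  ext i; fin_cases i <;> simp [polarRadial]

theorem polarAngular_eq_smul_single (θ : ℝ) :
    polarAngular θ =
      -Real.sin θ • EuclideanSpace.single 0 1 + Real.cos θ • EuclideanSpace.single 1 1 := by
  ext i; fin_cases i <;> simp [polarAngular]

theorem hasDerivAt_polarRadial (θ : ℝ) : HasDerivAt polarRadial (polarAngular θ) θ := by
  rw [funext polarRadial_eq_smul_single, polarAngular_eq_smul_single]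
  exact ((Real.hasDerivAt_cos θ).smul_const _).add ((Real.hasDerivAt_sin θ).smul_const _)

theorem hasDerivAt_polarAngular (θ : ℝ) : HasDerivAt polarAngular (-polarRadial θ) θ := by
  rw [funext polarAngular_eq_smul_single, polarRadial_eq_smul_single, neg_add, ← neg_smul,
    ← neg_smul]
  exact ((Real.hasDerivAt_sin θ).neg.smul_const _).add ((Real.hasDerivAt_cos θ).smul_const _)

theorem trace_eq_inner_polarRadial_add_inner_polarAngular (T : E2 →ₗ[ℝ] E2) (θ : ℝ) :
    LinearMap.trace ℝ E2 T =
      ⟪polarRadial θ, T (polarRadial θ)⟫ + ⟪polarAngular θ, T (polarAngular θ)⟫ := by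
  rw [T.trace_eq_sum_inner (EuclideanSpace.basisFun (Fin 2) ℝ), Fin.sum_univ_two,
    polarRadial_eq_smul_single, polarAngular_eq_smul_single]
  simp only [EuclideanSpace.basisFun_apply, map_add, map_smul, inner_add_left, inner_add_right,
    real_inner_smul_left, real_inner_smul_right]
  linear_combination -(⟪EuclideanSpace.single 0 1, T (EuclideanSpace.single 0 1)⟫ +
    ⟪EuclideanSpace.single 1 1, T (EuclideanSpace.single 1 1)⟫) * Real.sin_sq_add_cos_sq θ

theorem bijOn_smul_polarRadial {r : ℝ} (hr : 0 < r) :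
    BijOn (fun θ => r • polarRadial θ) (Ioc (-π) π) (sphere 0 r) := by
  refine ⟨fun θ _ => by simp [norm_smul_polarRadial hr.le], fun θ hθ φ hφ h => ?_, fun x hx => ?_⟩
  · have hρ : polarRadial θ = polarRadial φ := smul_right_injective E2 hr.ne' h
    have hcos : Real.cos θ = Real.cos φ := by simpa [polarRadial] using congrArg (· 0) hρ
    have hsin : Real.sin θ = Real.sin φ := by simpa [polarRadial] using congrArg (· 1) hρ
    rw [← Real.Angle.toReal_coe_eq_self_iff_mem_Ioc.2 hθ,
      ← Real.Angle.toReal_coe_eq_self_iff_mem_Ioc.2 hφ, Real.Angle.cos_sin_inj hcos hsin]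
  · have hnorm : ‖(⟨x 0, x 1⟩ : ℂ)‖ = r := by
      rw [← mem_sphere_zero_iff_norm.1 hx, EuclideanSpace.norm_eq, Fin.sum_univ_two,
        Complex.norm_eq_sqrt_sq_add_sq]
      simp
    refine ⟨Complex.arg ⟨x 0, x 1⟩, Complex.arg_mem_Ioc _, ?_⟩
    ext i
    fin_cases i
    · simpa [polarRadial, hnorm] using Complex.norm_mul_cos_arg ⟨x 0, x 1⟩
    · simpa [polarRadial, hnorm] using Complex.norm_mul_sin_arg ⟨x 0, x 1⟩

theorem hausdorffMeasure_restrict_sphere {r : ℝ} (hr : 0 < r) :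
    (μH[1] : Measure E2).restrict (sphere 0 r) =
      ENNReal.ofReal r •
        Measure.map (fun θ => r • polarRadial θ) (volume.restrict (Ioc (-π) π)) := by
  have hderiv (θ : ℝ) : HasDerivAt (fun θ => r • polarRadial θ) (r • polarAngular θ) θ :=
    (hasDerivAt_polarRadial θ).const_smul r
  have hspeed (θ v : ℝ) :
      ‖ContinuousLinearMap.toSpanSingleton ℝ (r • polarAngular θ) v‖ = r.toNNReal * ‖v‖ := by
    simp [norm_smul, norm_polarAngular, abs_of_pos hr, hr.le, mul_comm]
  have hmeas : Measurable fun θ => r • polarRadial θ :=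
    (Differentiable.continuous fun θ => (hderiv θ).differentiableAt).measurable
  ext B hB
  have hset : MeasurableSet ((fun θ => r • polarRadial θ) ⁻¹' B ∩ Ioc (-π) π) :=
    (hmeas hB).inter measurableSet_Ioc
  rw [Measure.smul_apply, Measure.map_apply hmeas hB, Measure.restrict_apply (hmeas hB),
    Measure.restrict_apply hB, ← (bijOn_smul_polarRadial hr).image_eq, ← image_preimage_inter,
    hausdorffMeasure_image_eq_of_hasFDerivWithinAt hset
      ((bijOn_smul_polarRadial hr).injOn.mono inter_subset_right)
      (fun θ _ => (hderiv θ).hasFDerivAt.hasFDerivWithinAt) (fun θ _ => hspeed θ)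
      (Real.toNNReal_pos.2 hr) zero_le_one,
    hausdorffMeasure_real, ENNReal.rpow_one, smul_eq_mul, ENNReal.ofReal]

variable {G : Type*} [NormedAddCommGroup G] [NormedSpace ℝ G]

theorem integral_sphere_eq_intervalIntegral_polar {r : ℝ} (hr : 0 < r) {f : E2 → G}
    (hf : AEStronglyMeasurable f ((μH[1] : Measure E2).restrict (sphere 0 r))) :
    ∫ x in sphere 0 r, f x ∂μH[1] = r • ∫ θ in -π..π, f (r • polarRadial θ) := by
  rw [hausdorffMeasure_restrict_sphere hr] at hf ⊢
  have hcont : Continuous fun θ => r • polarRadial θ :=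
    Differentiable.continuous fun θ =>
      ((hasDerivAt_polarRadial θ).const_smul r).differentiableAt
  rw [integral_smul_measure, integral_map hcont.aemeasurable,
    ENNReal.toReal_ofReal hr.le, intervalIntegral.integral_of_le (by linarith [Real.pi_pos])]
  exact hf.mono_ac (Measure.absolutelyContinuous_smul (by simpa using hr))

theorem integral_eq_integral_polar (f : E2 → G) :
    ∫ x, f x = ∫ p in polarCoord.target, p.1 • f (p.1 • polarRadial p.2) := by
  have hpres := (EuclideanSpace.volume_preserving_symm_measurableEquiv_toLp (Fin 2)).symm.comp
    (volume_preserving_finTwoArrow ℝ).symm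
  have hemb := (MeasurableEquiv.toLp 2 (Fin 2 → ℝ)).measurableEmbedding.comp
    (MeasurableEquiv.finTwoArrow (α := ℝ)).symm.measurableEmbedding
  rw [← hpres.integral_comp hemb, ← integral_comp_polarCoord_symm]
  congr! 4 with p
  ext i
  fin_cases i <;> simp [polarRadial, polarCoord_symm_apply]

theorem setIntegral_ball_eq_integral_polar (r : ℝ) (f : E2 → G) :
    ∫ x in ball 0 r, f x =
      ∫ p in Icc 0 r ×ˢ Icc (-π) π, p.1 • f (p.1 • polarRadial p.2) := by
  have hball {p : ℝ × ℝ} (hp : 0 < p.1) : p.1 • polarRadial p.2 ∈ ball 0 r ↔ p.1 < r := by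
    rw [mem_ball_zero_iff, norm_smul_polarRadial hp.le]
  calc ∫ x in ball 0 r, f x
      = ∫ p in polarCoord.target, p.1 • (ball 0 r).indicator f (p.1 • polarRadial p.2) := by
        rw [← integral_indicator measurableSet_ball, integral_eq_integral_polar]
    _ = ∫ p in Ioo 0 r ×ˢ Ioo (-π) π, p.1 • f (p.1 • polarRadial p.2) := by
        rw [← integral_indicator polarCoord.open_target.measurableSet,
          ← integral_indicator (measurableSet_Ioo.prod measurableSet_Ioo)]
        congr with p
        by_cases hp : 0 < p.1
        · by_cases hpr : p.1 < r <;> simp [indicator, polarCoord_target, hball hp, hp, hpr]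
        · simp [polarCoord_target, hp]
    _ = ∫ p in Icc 0 r ×ˢ Icc (-π) π, p.1 • f (p.1 • polarRadial p.2) :=
        setIntegral_congr_set (Measure.set_prod_ae_eq Ioo_ae_eq_Icc Ioo_ae_eq_Icc)

end PolarCoordinates

section Divergence

/-- The divergence of a vector field `V`, defined without coordinates as the trace of its
derivative. -/
noncomputable def divergence {E : Type*} [NormedAddCommGroup E] [NormedSpace ℝ E]
    (V : E → E) (x : E) : ℝ :=
  LinearMap.trace ℝ E (fderiv ℝ V x)

section NormedSpace

variable {E : Type*} [NormedAddCommGroup E] [NormedSpace ℝ E] {x : E}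

theorem divergence_sub {V W : E → E} (hV : DifferentiableAt ℝ V x) (hW : DifferentiableAt ℝ W x) :
    divergence (fun y => V y - W y) x = divergence V x - divergence W x := by
  simp [divergence, fderiv_fun_sub hV hW]

variable [FiniteDimensional ℝ E]

theorem divergence_smul {f : E → ℝ} {V : E → E} (hf : DifferentiableAt ℝ f x)
    (hV : DifferentiableAt ℝ V x) :
    divergence (fun y => f y • V y) x = f x * divergence V x + fderiv ℝ f x (V x) := by
  rw [divergence, fderiv_fun_smul hf hV]
  simp [divergence]

theorem divergence_smul_id {f : E → ℝ} (hf : DifferentiableAt ℝ f x) :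
    divergence (fun y => f y • y) x = finrank ℝ E * f x + fderiv ℝ f x x := by
  rw [divergence_smul hf differentiableAt_fun_id, divergence, fderiv_fun_id]
  simp [mul_comm]

end NormedSpace

section InnerProductSpace

variable {E : Type*} [NormedAddCommGroup E] [InnerProductSpace ℝ E] [CompleteSpace E]
  {u : E → ℝ} {x : E}

theorem contDiffAt_gradient {m n : WithTop ℕ∞} (hu : ContDiffAt ℝ n u x) (hmn : m + 1 ≤ n) :
    ContDiffAt ℝ m (∇ u) x :=
  (InnerProductSpace.toDual ℝ E).symm.contDiff.contDiffAt.comp x (hu.fderiv_right hmn)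

theorem inner_fderiv_gradient (hu : DifferentiableAt ℝ (fderiv ℝ u) x) (v w : E) :
    ⟪fderiv ℝ (∇ u) x v, w⟫ = fderiv ℝ (fderiv ℝ u) x v w := by
  have h : HasFDerivAt (∇ u) _ x :=
    (InnerProductSpace.toDual ℝ E).symm.toContinuousLinearEquiv.hasFDerivAt.comp x hu.hasFDerivAt
  rw [h.fderiv]
  simp

theorem inner_fderiv_gradient_comm (hu : ContDiffAt ℝ 2 u x) (v w : E) :
    ⟪fderiv ℝ (∇ u) x v, w⟫ = ⟪fderiv ℝ (∇ u) x w, v⟫ := by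
  have hdiff : DifferentiableAt ℝ (fderiv ℝ u) x :=
    (hu.fderiv_right (m := 1) (by norm_num)).differentiableAt one_ne_zero
  rw [inner_fderiv_gradient hdiff, inner_fderiv_gradient hdiff]
  exact (hu.isSymmSndFDerivAt (by simp)) v w

/-- The Pohozaev vector field `(x · ∇u) ∇u - ½ ‖∇u‖² x` of a function `u`; it comes from the
energy-momentum tensor of the Dirichlet energy contracted with the generator `x` of dilations. -/
noncomputable def pohozaevField (u : E → ℝ) (x : E) : E :=
  ⟪x, ∇ u x⟫ • ∇ u x - (1 / 2 * ‖∇ u x‖ ^ 2) • x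

theorem contDiffAt_pohozaevField (hu : ContDiffAt ℝ 2 u x) :
    ContDiffAt ℝ 1 (pohozaevField u) x := by
  have h : ContDiffAt ℝ 1 (∇ u) x := contDiffAt_gradient hu (by norm_num)
  exact ((contDiffAt_id.inner ℝ h).smul h).sub
    ((contDiffAt_const.mul (h.norm_sq ℝ)).smul contDiffAt_id)

-- The second derivatives that do not form the Laplacian cancel by symmetry of the Hessian.
theorem divergence_pohozaevField [FiniteDimensional ℝ E] (hu : ContDiffAt ℝ 2 u x) :
    divergence (pohozaevField u) x =
      ⟪x, ∇ u x⟫ * divergence (∇ u) x + (1 - finrank ℝ E / 2) * ‖∇ u x‖ ^ 2 := by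
  have h : DifferentiableAt ℝ (∇ u) x :=
    (contDiffAt_gradient hu (by norm_num : (1 : WithTop ℕ∞) + 1 ≤ 2)).differentiableAt one_ne_zero
  have hsymm : fderiv ℝ u x (fderiv ℝ (∇ u) x x) = ⟪x, fderiv ℝ (∇ u) x (∇ u x)⟫ := by
    rw [← inner_gradient_left, real_inner_comm, inner_fderiv_gradient_comm hu, real_inner_comm]
  have hself : fderiv ℝ u x (∇ u x) = ‖∇ u x‖ ^ 2 := by
    rw [← inner_gradient_left, real_inner_self_eq_norm_sq]
  have hinner : HasFDerivAt (fun y => ⟪y, ∇ u y⟫) _ x := (hasFDerivAt_id x).inner ℝ h.hasFDerivAt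
  have hnorm : HasFDerivAt (fun y => 1 / 2 * ‖∇ u y‖ ^ 2) _ x := h.hasFDerivAt.norm_sq.const_mul _
  have hdiv : divergence (pohozaevField u) x = _ :=
    divergence_sub (hinner.differentiableAt.smul h)
      (hnorm.differentiableAt.smul differentiableAt_id)
  rw [hdiv, divergence_smul hinner.differentiableAt h, divergence_smul_id hnorm.differentiableAt,
    hinner.fderiv, hnorm.fderiv]
  simp only [ContinuousLinearMap.comp_apply, ContinuousLinearMap.prod_apply,
    ContinuousLinearMap.id_apply, fderivInnerCLM_apply, smul_apply, coe_innerSL_apply,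
    inner_gradient_left, inner_gradient_right, Real.ringHom_apply,
    id_eq, nsmul_eq_mul, Nat.cast_ofNat, smul_eq_mul]
  linear_combination hself - hsymm

end InnerProductSpace

theorem laplacian_eq_divergence_gradient {u : E2 → ℝ} {x : E2} (hu : ContDiffAt ℝ 2 u x) :
    laplacian u x = divergence (∇ u) x := by
  have hdiff : DifferentiableAt ℝ (fderiv ℝ u) x :=
    (hu.fderiv_right (m := 1) (by norm_num)).differentiableAt one_ne_zero
  rw [laplacian, divergence, LinearMap.trace_eq_sum_inner _ (EuclideanSpace.basisFun (Fin 2) ℝ)]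
  refine Finset.sum_congr rfl fun i _ => ?_
  rw [fderiv_clm_apply hdiff (differentiableAt_const _), real_inner_comm]
  simp [inner_fderiv_gradient hdiff]

end Divergence

section Disc

/-- The radial flux density of a vector field `V` in polar coordinates, with the Jacobian `r` of the
arc length included. -/
noncomputable def radialFlux (V : E2 → E2) (p : ℝ × ℝ) : ℝ :=
  p.1 * ⟪polarRadial p.2, V (p.1 • polarRadial p.2)⟫

/-- The angular flux density of a vector field `V` in polar coordinates. With
`radialFlux` it turns the divergence theorem on a disc into that on a rectangle. -/
noncomputable def angularFlux (V : E2 → E2) (p : ℝ × ℝ) : ℝ :=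
  ⟪polarAngular p.2, V (p.1 • polarRadial p.2)⟫

variable {V : E2 → E2} {n : WithTop ℕ∞} {r θ δ : ℝ}

theorem contDiff_polarRadial : ContDiff ℝ n polarRadial := by
  rw [funext polarRadial_eq_smul_single]
  fun_prop

theorem contDiff_polarAngular : ContDiff ℝ n polarAngular := by
  rw [funext polarAngular_eq_smul_single]
  fun_prop

theorem contDiff_fst_smul_polarRadial_snd :
    ContDiff ℝ n fun p : ℝ × ℝ => p.1 • polarRadial p.2 :=
  contDiff_fst.smul (contDiff_polarRadial.comp contDiff_snd)

theorem contDiffAt_radialFlux {p : ℝ × ℝ} (hV : ContDiffAt ℝ n V (p.1 • polarRadial p.2)) :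
    ContDiffAt ℝ n (radialFlux V) p :=
  contDiffAt_fst.mul ((contDiff_polarRadial.comp contDiff_snd).contDiffAt.inner ℝ
    (hV.comp p contDiff_fst_smul_polarRadial_snd.contDiffAt))

theorem contDiffAt_angularFlux {p : ℝ × ℝ} (hV : ContDiffAt ℝ n V (p.1 • polarRadial p.2)) :
    ContDiffAt ℝ n (angularFlux V) p :=
  (contDiff_polarAngular.comp contDiff_snd).contDiffAt.inner ℝ
    (hV.comp p contDiff_fst_smul_polarRadial_snd.contDiffAt)

theorem hasDerivAt_radialFlux (hV : DifferentiableAt ℝ V (r • polarRadial θ)) :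
    HasDerivAt (fun t => radialFlux V (t, θ))
      (⟪polarRadial θ, V (r • polarRadial θ)⟫ +
        r * ⟪polarRadial θ, fderiv ℝ V (r • polarRadial θ) (polarRadial θ)⟫) r := by
  have hpoint : HasDerivAt (fun t : ℝ => t • polarRadial θ) (polarRadial θ) r := by
    simpa using (hasDerivAt_id r).smul_const (polarRadial θ)
  simpa [radialFlux] using (hasDerivAt_id' r).fun_mul
    ((hasDerivAt_const r (polarRadial θ)).inner ℝ (hV.hasFDerivAt.comp_hasDerivAt r hpoint))

theorem hasDerivAt_angularFlux (hV : DifferentiableAt ℝ V (r • polarRadial θ)) :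
    HasDerivAt (fun t => angularFlux V (r, t))
      (r * ⟪polarAngular θ, fderiv ℝ V (r • polarRadial θ) (polarAngular θ)⟫ -
        ⟪polarRadial θ, V (r • polarRadial θ)⟫) θ := by
  have hpoint := (hasDerivAt_polarRadial θ).const_smul r
  simpa [angularFlux, real_inner_smul_right, sub_eq_add_neg] using
    (hasDerivAt_polarAngular θ).inner ℝ (hV.hasFDerivAt.comp_hasDerivAt θ hpoint)

theorem fderiv_radialFlux_add_fderiv_angularFlux {p : ℝ × ℝ}
    (hV : ContDiffAt ℝ 1 V (p.1 • polarRadial p.2)) :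
    fderiv ℝ (radialFlux V) p (1, 0) + fderiv ℝ (angularFlux V) p (0, 1) =
      p.1 * divergence V (p.1 • polarRadial p.2) := by
  have hrad : HasDerivAt (fun t => radialFlux V (t, p.2)) (fderiv ℝ (radialFlux V) p (1, 0)) p.1 :=
    ((contDiffAt_radialFlux hV).differentiableAt one_ne_zero).hasFDerivAt.comp_hasDerivAt
      (f := fun t => (t, p.2)) p.1 ((hasDerivAt_id _).prodMk (hasDerivAt_const _ _))
  have hang : HasDerivAt (fun t => angularFlux V (p.1, t))
      (fderiv ℝ (angularFlux V) p (0, 1)) p.2 :=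
    ((contDiffAt_angularFlux hV).differentiableAt one_ne_zero).hasFDerivAt.comp_hasDerivAt
      (f := fun t => (p.1, t)) p.2 ((hasDerivAt_const _ _).prodMk (hasDerivAt_id _))
  have hdiff := hV.differentiableAt one_ne_zero
  rw [hrad.unique (hasDerivAt_radialFlux hdiff), hang.unique (hasDerivAt_angularFlux hdiff),
    divergence, trace_eq_inner_polarRadial_add_inner_polarAngular _ p.2]
  simp only [ContinuousLinearMap.coe_coe]
  ring

-- The two angular sides of the rectangle cancel by periodicity, and the side `r = 0` carries no
-- flux.
theorem integral_mul_divergence_polar (hδ : 0 ≤ δ)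
    (hV : ∀ x ∈ closedBall 0 δ, ContDiffAt ℝ 1 V x) :
    ∫ p in Icc 0 δ ×ˢ Icc (-π) π, p.1 * divergence V (p.1 • polarRadial p.2) =
      ∫ θ in -π..π, radialFlux V (δ, θ) := by
  rw [Icc_prod_Icc]
  have hVp : ∀ p ∈ Icc ((0 : ℝ), -π) (δ, π), ContDiffAt ℝ 1 V (p.1 • polarRadial p.2) :=
    fun p hp => hV _ (by simpa [norm_smul_polarRadial hp.1.1] using hp.2.1)
  have hrad (p) (hp : p ∈ Icc ((0 : ℝ), -π) (δ, π)) := contDiffAt_radialFlux (hVp p hp)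
  have hang (p) (hp : p ∈ Icc ((0 : ℝ), -π) (δ, π)) := contDiffAt_angularFlux (hVp p hp)
  have hIoo : Ioo 0 δ ×ˢ Ioo (-π) π ⊆ Icc ((0 : ℝ), -π) (δ, π) := by
    rw [← Icc_prod_Icc]
    exact prod_mono Ioo_subset_Icc_self Ioo_subset_Icc_self
  have hint : IntegrableOn
      (fun p => fderiv ℝ (radialFlux V) p (1, 0) + fderiv ℝ (angularFlux V) p (0, 1))
      (Icc ((0 : ℝ), -π) (δ, π)) :=
    ContinuousOn.integrableOn_compact isCompact_Icc fun p hp => ContinuousAt.continuousWithinAt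
      ((((hrad p hp).fderiv_right (m := 0) le_rfl).continuousAt.clm_apply continuousAt_const).add
        (((hang p hp).fderiv_right (m := 0) le_rfl).continuousAt.clm_apply continuousAt_const))
  rw [← setIntegral_congr_fun measurableSet_Icc fun p hp =>
      fderiv_radialFlux_add_fderiv_angularFlux (hVp p hp),
    integral_divergence_prod_Icc_of_hasFDerivAt_of_le _ _ _ _ _ _
      ⟨hδ, by linarith [Real.pi_pos]⟩
      (fun p hp => (hrad p hp).continuousAt.continuousWithinAt)
      (fun p hp => (hang p hp).continuousAt.continuousWithinAt)
      (fun p hp => ((hrad p (hIoo hp)).differentiableAt one_ne_zero).hasFDerivAt)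
      (fun p hp => ((hang p (hIoo hp)).differentiableAt one_ne_zero).hasFDerivAt) hint]
  simp [radialFlux, angularFlux, polarRadial, polarAngular]

theorem integral_sphere_inner_eq_integral_radialFlux (hδ : 0 < δ)
    (hV : ContinuousOn V (sphere 0 δ)) :
    ∫ x in sphere 0 δ, ⟪δ⁻¹ • x, V x⟫ ∂μH[1] = ∫ θ in -π..π, radialFlux V (δ, θ) := by
  have hcont : ContinuousOn (fun x => ⟪δ⁻¹ • x, V x⟫) (sphere 0 δ) :=
    (continuousOn_id.const_smul δ⁻¹).inner hV
  rw [integral_sphere_eq_intervalIntegral_polar hδ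
    (hcont.aestronglyMeasurable isClosed_sphere.measurableSet)]
  simp [radialFlux, inv_smul_smul₀ hδ.ne']

theorem integral_divergence_ball (hδ : 0 < δ)
    (hV : ∀ x ∈ closedBall 0 δ, ContDiffAt ℝ 1 V x) :
    ∫ x in ball 0 δ, divergence V x = ∫ x in sphere 0 δ, ⟪δ⁻¹ • x, V x⟫ ∂μH[1] := by
  rw [setIntegral_ball_eq_integral_polar, integral_sphere_inner_eq_integral_radialFlux hδ
    fun x hx => (hV x (sphere_subset_closedBall hx)).continuousAt.continuousWithinAt]
  exact integral_mul_divergence_polar hδ.le hV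

theorem integral_ball_two_mul_add_fderiv_self {w : E2 → ℝ} (hδ : 0 < δ)
    (hw : ∀ x ∈ closedBall 0 δ, ContDiffAt ℝ 1 w x) :
    ∫ x in ball 0 δ, (2 * w x + fderiv ℝ w x x) = δ * ∫ x in sphere 0 δ, w x ∂μH[1] := by
  calc ∫ x in ball 0 δ, (2 * w x + fderiv ℝ w x x)
      = ∫ x in ball 0 δ, divergence (fun y => w y • y) x :=
        setIntegral_congr_fun measurableSet_ball fun x hx => by
          simp [divergence_smul_id
            ((hw x (ball_subset_closedBall hx)).differentiableAt one_ne_zero)]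
    _ = ∫ x in sphere 0 δ, ⟪δ⁻¹ • x, w x • x⟫ ∂μH[1] :=
        integral_divergence_ball hδ fun x hx => (hw x hx).smul contDiffAt_id
    _ = ∫ x in sphere 0 δ, δ * w x ∂μH[1] :=
        setIntegral_congr_fun isClosed_sphere.measurableSet fun x hx => by
          rw [real_inner_smul_left, real_inner_smul_right, real_inner_self_eq_norm_sq,
            mem_sphere_zero_iff_norm.1 hx]
          field_simp
    _ = δ * ∫ x in sphere 0 δ, w x ∂μH[1] := integral_const_mul _ _

theorem integral_ball_fderiv_self_mul_laplacian {u : E2 → ℝ} (hδ : 0 < δ)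
    (hu : ∀ x ∈ closedBall 0 δ, ContDiffAt ℝ 2 u x) :
    ∫ x in ball 0 δ, fderiv ℝ u x x * laplacian u x =
      δ * ∫ x in sphere 0 δ,
        ((fderiv ℝ u x (δ⁻¹ • x)) ^ 2 - (1 / 2) * ‖∇ u x‖ ^ 2) ∂μH[1] := by
  calc ∫ x in ball 0 δ, fderiv ℝ u x x * laplacian u x
      = ∫ x in ball 0 δ, divergence (pohozaevField u) x :=
        setIntegral_congr_fun measurableSet_ball fun x hx => by
          have hux := hu x (ball_subset_closedBall hx)
          simp [divergence_pohozaevField hux, laplacian_eq_divergence_gradient hux]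
    _ = ∫ x in sphere 0 δ, ⟪δ⁻¹ • x, pohozaevField u x⟫ ∂μH[1] :=
        integral_divergence_ball hδ fun x hx => contDiffAt_pohozaevField (hu x hx)
    _ = ∫ x in sphere 0 δ,
          δ * ((fderiv ℝ u x (δ⁻¹ • x)) ^ 2 - (1 / 2) * ‖∇ u x‖ ^ 2) ∂μH[1] :=
        setIntegral_congr_fun isClosed_sphere.measurableSet fun x hx => by
          simp only [pohozaevField, inner_sub_right, real_inner_smul_left, real_inner_smul_right,
            real_inner_self_eq_norm_sq, mem_sphere_zero_iff_norm.1 hx, inner_gradient_right,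
            Real.ringHom_apply, map_smul, smul_eq_mul]
          field_simp
    _ = _ := integral_const_mul _ _

theorem integrableOn_ball_of_continuousAt {w : E2 → ℝ}
    (hw : ∀ x ∈ closedBall 0 δ, ContinuousAt w x) : IntegrableOn w (ball 0 δ) :=
  (ContinuousOn.integrableOn_compact (isCompact_closedBall 0 δ) fun x hx =>
    (hw x hx).continuousWithinAt).mono_set ball_subset_closedBall

theorem integrableOn_ball_mul_exp_mul_fderiv_self {h v : E2 → ℝ}
    (hh : ∀ x ∈ closedBall 0 δ, ContinuousAt h x)
    (hv : ∀ x ∈ closedBall 0 δ, ContDiffAt ℝ 1 v x) :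
    IntegrableOn (fun x => h x * Real.exp (v x) * fderiv ℝ v x x) (ball 0 δ) :=
  integrableOn_ball_of_continuousAt fun x hx =>
    ((hh x hx).mul (hv x hx).continuousAt.rexp).mul
      (((hv x hx).fderiv_right (m := 0) le_rfl).continuousAt.clm_apply continuousAt_id)

theorem integral_ball_mul_exp_mul_fderiv_self {h v : E2 → ℝ} (hδ : 0 < δ)
    (hh : ∀ x ∈ closedBall 0 δ, ContDiffAt ℝ 1 h x)
    (hv : ∀ x ∈ closedBall 0 δ, ContDiffAt ℝ 1 v x) :
    ∫ x in ball 0 δ, h x * Real.exp (v x) * fderiv ℝ v x x =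
      δ * (∫ x in sphere 0 δ, h x * Real.exp (v x) ∂μH[1]) -
        ∫ x in ball 0 δ, (2 * h x * Real.exp (v x) + ⟪x, ∇ h x⟫ * Real.exp (v x)) := by
  have hw (x) (hx : x ∈ closedBall 0 δ) := (hh x hx).mul (hv x hx).exp
  have hint : IntegrableOn
      (fun x => 2 * h x * Real.exp (v x) + ⟪x, ∇ h x⟫ * Real.exp (v x)) (ball 0 δ) := by
    refine integrableOn_ball_of_continuousAt fun x hx => ?_
    have hgrad := (contDiffAt_gradient (m := 0) (hh x hx) le_rfl).continuousAt
    have hexp := (hv x hx).continuousAt.rexp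
    exact ((continuousAt_const.mul (hh x hx).continuousAt).mul hexp).add
      ((continuousAt_id.inner hgrad).mul hexp)
  rw [← integral_ball_two_mul_add_fderiv_self hδ hw, eq_sub_iff_add_eq,
    ← integral_add (integrableOn_ball_mul_exp_mul_fderiv_self
      (fun x hx => (hh x hx).continuousAt) hv) hint]
  refine setIntegral_congr_fun measurableSet_ball fun x hx => ?_
  have hhx := (hh x (ball_subset_closedBall hx)).differentiableAt one_ne_zero
  have hvx := (hv x (ball_subset_closedBall hx)).differentiableAt one_ne_zero
  simp only [fderiv_fun_mul hhx hvx.exp, fderiv_exp hvx, inner_gradient_right, Real.ringHom_apply,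
    add_apply, smul_apply, smul_eq_mul]
  ring

theorem pohozaev_identity_disc_general (δ ρ : ℝ) (hδ : 0 < δ)
    (u h₁ h₂ : E2 → ℝ) (U : Set E2) (hU : IsOpen U)
    (hBU : Metric.closedBall (0 : E2) δ ⊆ U)
    (hu : ContDiffOn ℝ 2 u U) (hh₁ : ContDiffOn ℝ 1 h₁ U) (hh₂ : ContDiffOn ℝ 1 h₂ U)
    (hpde : ∀ x ∈ Metric.ball (0 : E2) δ,
      -laplacian u x = ρ * h₁ x * Real.exp (u x) - ρ * h₂ x * Real.exp (-u x)) :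
    -δ * ∫ x in Metric.sphere (0 : E2) δ,
        ((fderiv ℝ u x (δ⁻¹ • x)) ^ 2 - (1 / 2) * ‖gradient u x‖ ^ 2) ∂μH[1] =
      ρ * δ * (∫ x in Metric.sphere (0 : E2) δ, h₁ x * Real.exp (u x) ∂μH[1]) -
        ρ * (∫ x in Metric.ball (0 : E2) δ,
          (2 * h₁ x * Real.exp (u x) + ⟪x, gradient h₁ x⟫ * Real.exp (u x))) +
        ρ * δ * (∫ x in Metric.sphere (0 : E2) δ, h₂ x * Real.exp (-u x) ∂μH[1]) -
        ρ * (∫ x in Metric.ball (0 : E2) δ,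
          (2 * h₂ x * Real.exp (-u x) + ⟪x, gradient h₂ x⟫ * Real.exp (-u x))) := by
  have hmem (x) (hx : x ∈ closedBall 0 δ) : U ∈ 𝓝 x := hU.mem_nhds (hBU hx)
  have hu₂ (x) (hx : x ∈ closedBall 0 δ) : ContDiffAt ℝ 2 u x := hu.contDiffAt (hmem x hx)
  have hu₁ (x) (hx : x ∈ closedBall 0 δ) : ContDiffAt ℝ 1 u x := (hu₂ x hx).of_le one_le_two
  have hneg (x) (hx : x ∈ closedBall 0 δ) := (hu₁ x hx).neg
  have hh₁' (x) (hx : x ∈ closedBall 0 δ) : ContDiffAt ℝ 1 h₁ x := hh₁.contDiffAt (hmem x hx)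
  have hh₂' (x) (hx : x ∈ closedBall 0 δ) : ContDiffAt ℝ 1 h₂ x := hh₂.contDiffAt (hmem x hx)
  have hsplit : ∫ x in ball 0 δ, fderiv ℝ u x x * laplacian u x =
      -(ρ * (∫ x in ball 0 δ, h₁ x * Real.exp (u x) * fderiv ℝ u x x) +
        ρ * ∫ x in ball 0 δ, h₂ x * Real.exp (-u x) * fderiv ℝ (fun y => -u y) x x) := by
    rw [← mul_add, ← integral_add
        (integrableOn_ball_mul_exp_mul_fderiv_self (fun x hx => (hh₁' x hx).continuousAt) hu₁)
        (integrableOn_ball_mul_exp_mul_fderiv_self (fun x hx => (hh₂' x hx).continuousAt) hneg),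
      ← integral_const_mul, ← integral_neg]
    refine setIntegral_congr_fun measurableSet_ball fun x hx => ?_
    simp only [fderiv_fun_neg, neg_apply]
    linear_combination -fderiv ℝ u x x * hpde x hx
  rw [integral_ball_fderiv_self_mul_laplacian hδ hu₂,
    integral_ball_mul_exp_mul_fderiv_self hδ hh₁' hu₁,
    integral_ball_mul_exp_mul_fderiv_self hδ hh₂' hneg] at hsplit
  linear_combination -hsplit

end Disc

/-- Pohozaev identity on the disc of radius `δ` in `ℝ²` for a solution of
`-Δu = ρ h₁ e^u - ρ h₂ e^{-u}`. Boundary integrals are taken with respect to arc-length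
(one-dimensional Hausdorff) measure `μH[1]` on the circle `∂B_δ(0)`, and `∂u/∂n` is the
outward radial derivative `fderiv ℝ u x (δ⁻¹ • x)`. -/
theorem pohozaev_identity_disc (δ ρ : ℝ) (hδ : 0 < δ)
    (u h₁ h₂ : E2 → ℝ) (U : Set E2) (hU : IsOpen U)
    (hBU : Metric.closedBall (0 : E2) δ ⊆ U)
    (hu : ContDiffOn ℝ 2 u U) (hh₁ : ContDiffOn ℝ 2 h₁ U) (hh₂ : ContDiffOn ℝ 2 h₂ U)
    (hpde : ∀ x ∈ Metric.ball (0 : E2) δ,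
      -laplacian u x = ρ * h₁ x * Real.exp (u x) - ρ * h₂ x * Real.exp (-u x)) :
    -δ * ∫ x in Metric.sphere (0 : E2) δ,
        ((fderiv ℝ u x (δ⁻¹ • x)) ^ 2 - (1 / 2) * ‖gradient u x‖ ^ 2) ∂μH[1] =
      ρ * δ * (∫ x in Metric.sphere (0 : E2) δ, h₁ x * Real.exp (u x) ∂μH[1]) -
        ρ * (∫ x in Metric.ball (0 : E2) δ,
          (2 * h₁ x * Real.exp (u x) + ⟪x, gradient h₁ x⟫ * Real.exp (u x))) +
        ρ * δ * (∫ x in Metric.sphere (0 : E2) δ, h₂ x * Real.exp (-u x) ∂μH[1]) -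
        ρ * (∫ x in Metric.ball (0 : E2) δ,
          (2 * h₂ x * Real.exp (-u x) + ⟪x, gradient h₂ x⟫ * Real.exp (-u x))) :=
  pohozaev_identity_disc_general δ ρ hδ u h₁ h₂ U hU hBU hu (hh₁.of_le one_le_two)
    (hh₂.of_le one_le_two) hpde
end

section
/- Let a, A, λ, ν, α, β, ξ ∈ ℝ with α + β = 0, and define G on ℝ² \ {0} by G(x) = a·log‖x‖ + A + λ·x₁ + ν·x₂ + α·x₁² + β·x₂² + ξ·x₁·x₂. Then for every r > 0, ∫_{∂B_r(0)} G·(∂G/∂n) dS = 2π·a²·log r + 2π·a·A + π·(λ² + ν²)·r² + 2π·(α² + ξ²/4)·r⁴. -/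
open MeasureTheory
open scoped Real

/-!
On the circle of radius `r`, the normal derivative turns the polar expansion
`G = a log ρ + A + ∑ ρ ^ k (c k cos kθ + d k sin kθ)` into
`a / r + ∑ k r ^ (k - 1) (c k cos kθ + d k sin kθ)`, so by orthogonality of the trigonometric
system the flux of `G ∂G/∂n` is `2πa (a log r + A) + π ∑ k r ^ (2k) (c k ^ 2 + d k ^ 2)`.
The condition `α + β = 0` says that the quadratic part of `G` is harmonic, so a pure mode `k = 2`.

That `μH[1]` on the circle is `r dθ` is a local fact: a unit-speed curve distorts small distances
by factors tending to `1`, and such a map preserves Hausdorff measures.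
-/

open Filter
open scoped ENNReal NNReal Topology

theorem measure_le_of_forall_nhds {X : Type*} [TopologicalSpace X] [SecondCountableTopology X]
    [MeasurableSpace X] [OpensMeasurableSpace X] {μ ν : Measure X}
    (h : ∀ x, ∃ U ∈ 𝓝 x, ∀ t ⊆ U, MeasurableSet t → μ t ≤ ν t) : μ ≤ ν := by
  let P : Set X → Prop := fun V => MeasurableSet V ∧ ∀ t ⊆ V, MeasurableSet t → μ t ≤ ν t
  obtain ⟨V, hV, hcover⟩ : ∃ V : ℕ → Set X, (∀ n, P (V n)) ∧ ⋃ n, V n = Set.univ := by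
    choose U hU hle using h
    obtain ⟨c, hc, hcover⟩ := TopologicalSpace.countable_cover_nhds fun x =>
      interior_mem_nhds.2 (hU x)
    refine (Set.exists_seq_cover_iff_countable ⟨∅, .empty, fun t ht _ => ?_⟩).2
      ⟨(fun x => interior (U x)) '' c, hc.image _, Set.forall_mem_image.2 fun x _ => ?_,
        by rwa [Set.sUnion_image]⟩
    · exact ⟨isOpen_interior.measurableSet, fun t ht => hle x t (ht.trans interior_subset)⟩
    · simp [Set.subset_empty_iff.1 ht]
  have hmeas : ∀ n, MeasurableSet (disjointed V n) := MeasurableSet.disjointed fun n => (hV n).1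
  refine Measure.le_iff.2 fun t ht => ?_
  have htcover : t = ⋃ n, t ∩ disjointed V n := by
    rw [← Set.inter_iUnion, iUnion_disjointed, hcover, Set.inter_univ]
  calc μ t ≤ ∑' n, μ (t ∩ disjointed V n) := by
        nth_rewrite 1 [htcover]
        exact measure_iUnion_le _
    _ ≤ ∑' n, ν (t ∩ disjointed V n) := ENNReal.tsum_le_tsum fun n =>
        (hV n).2 _ (Set.inter_subset_right.trans (disjointed_subset V n)) (ht.inter (hmeas n))
    _ = ν t := by
        nth_rewrite 2 [htcover]
        have hdisj : Pairwise (Function.onFun Disjoint fun n => t ∩ disjointed V n) :=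
          (disjoint_disjointed V).mono fun _ _ =>
            Disjoint.mono Set.inter_subset_right Set.inter_subset_right
        exact (measure_iUnion hdisj fun n => ht.inter (hmeas n)).symm

theorem measure_le_of_forall_one_lt_rpow_smul {X : Type*} [MeasurableSpace X] {μ ν : Measure X}
    {d : ℝ} (h : ∀ K : ℝ≥0, 1 < K → μ ≤ (K : ℝ≥0∞) ^ d • ν) : μ ≤ ν := by
  refine Measure.le_iff'.2 fun t => ?_
  have hlim : Tendsto (fun K : ℝ≥0 => (K : ℝ≥0∞) ^ d * ν t) (𝓝[>] 1) (𝓝 (ν t)) := by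
    have hcoe : Tendsto (fun K : ℝ≥0 => (K : ℝ≥0∞)) (𝓝[>] 1) (𝓝 1) :=
      (ENNReal.continuous_coe.tendsto' 1 1 ENNReal.coe_one).mono_left nhdsWithin_le_nhds
    simpa using ENNReal.Tendsto.mul_const (hcoe.ennrpow_const d) (Or.inl (by simp))
  exact ge_of_tendsto hlim (eventually_mem_nhdsWithin.mono fun K hK => h K hK t)

/-- A map `f` is infinitesimally isometric if it distorts distances near every point by a factor
arbitrarily close to `1`; this local condition already makes `f` preserve Hausdorff measures. -/
def InfinitesimalIsometry {X Y : Type*} [PseudoEMetricSpace X] [PseudoEMetricSpace Y]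
    (f : X → Y) : Prop :=
  ∀ K : ℝ≥0, 1 < K → ∀ x, ∃ U ∈ 𝓝 x, ∀ y ∈ U, ∀ z ∈ U,
    edist (f y) (f z) ≤ K * edist y z ∧ edist y z ≤ K * edist (f y) (f z)

theorem InfinitesimalIsometry.of_isometry {X Y : Type*} [PseudoEMetricSpace X]
    [PseudoEMetricSpace Y] {f : X → Y} (hf : Isometry f) : InfinitesimalIsometry f :=
  fun K hK x => ⟨Set.univ, univ_mem, fun y _ z _ => by
    have hle : edist y z ≤ K * edist y z := le_mul_of_one_le_left' (by exact_mod_cast hK.le)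
    simpa [hf.edist_eq y z] using hle⟩

section HausdorffMeasure

variable {X Y : Type*} [EMetricSpace X] [MeasurableSpace X] [BorelSpace X] [EMetricSpace Y]
  [MeasurableSpace Y] [BorelSpace Y] {f : X → Y} {d : ℝ}

theorem hausdorffMeasure_le_mul_image {K : ℝ≥0} {s : Set X} (hd : 0 ≤ d)
    (hf : ∀ y ∈ s, ∀ z ∈ s, edist y z ≤ K * edist (f y) (f z)) :
    μH[d] s ≤ (K : ℝ≥0∞) ^ d * μH[d] (f '' s) := by
  have hanti : AntilipschitzWith K (s.domRestrict f) := fun y z => hf y y.2 z z.2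
  have hle := hanti.le_hausdorffMeasure_image hd Set.univ
  rwa [← (isometry_subtype_coe (s := s)).hausdorffMeasure_image (Or.inl hd), Set.image_univ,
    Subtype.range_coe, Set.image_univ, Set.range_domRestrict] at hle

namespace InfinitesimalIsometry

variable [SecondCountableTopology X]

theorem comap_hausdorffMeasure (hf : InfinitesimalIsometry f) (hemb : MeasurableEmbedding f)
    (hd : 0 ≤ d) : (μH[d] : Measure Y).comap f = μH[d] := by
  refine le_antisymm
    (measure_le_of_forall_one_lt_rpow_smul (d := d) fun K hK =>
      measure_le_of_forall_nhds fun x => ?_)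
    (measure_le_of_forall_one_lt_rpow_smul (d := d) fun K hK =>
      measure_le_of_forall_nhds fun x => ?_)
  all_goals obtain ⟨U, hU, hbilip⟩ := hf K hK x
  · refine ⟨U, hU, fun t htU _ => ?_⟩
    have hlip : LipschitzOnWith K f t := fun y hy z hz => (hbilip y (htU hy) z (htU hz)).1
    simpa [hemb.comap_apply] using hlip.hausdorffMeasure_image_le hd
  · refine ⟨U, hU, fun t htU _ => ?_⟩
    simpa [hemb.comap_apply] using hausdorffMeasure_le_mul_image hd fun y hy z hz =>
      (hbilip y (htU hy) z (htU hz)).2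

theorem setIntegral_range_hausdorffMeasure {G : Type*} [NormedAddCommGroup G] [NormedSpace ℝ G]
    (hf : InfinitesimalIsometry f) (hemb : MeasurableEmbedding f) (hd : 0 ≤ d) (g : Y → G) :
    ∫ y in Set.range f, g y ∂μH[d] = ∫ x, g (f x) ∂μH[d] := by
  rw [← hemb.map_comap, hf.comap_hausdorffMeasure hemb hd, hemb.integral_map]

end InfinitesimalIsometry

end HausdorffMeasure

section StrictDerivative

variable {E F : Type*} [NormedAddCommGroup E] [NormedSpace ℝ E] [NormedAddCommGroup F]
  [NormedSpace ℝ F]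

theorem exists_nhds_abs_norm_sub_le {f : E → F} {f' : E →ₗᵢ[ℝ] F} {x : E}
    (hf : HasStrictFDerivAt f f'.toContinuousLinearMap x) {ε : ℝ} (hε : 0 < ε) :
    ∃ U ∈ 𝓝 x, ∀ y ∈ U, ∀ z ∈ U, |‖f y - f z‖ - ‖y - z‖| ≤ ε * ‖y - z‖ := by
  obtain ⟨U, hU, happrox⟩ := hf.approximates_deriv_on_nhds (c := ⟨ε, hε.le⟩) (Or.inr hε)
  refine ⟨U, hU, fun y hy z hz => ?_⟩
  calc |‖f y - f z‖ - ‖y - z‖| = |‖f y - f z‖ - ‖f' (y - z)‖| := by rw [f'.norm_map]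
    _ ≤ ‖f y - f z - f' (y - z)‖ := abs_norm_sub_norm_le _ _
    _ ≤ ε * ‖y - z‖ := happrox y hy z hz

theorem infinitesimalIsometry_domRestrict {f : E → F} {s : Set E}
    (hf : ∀ x ∈ s, ∃ f' : E →ₗᵢ[ℝ] F, HasStrictFDerivAt f f'.toContinuousLinearMap x) :
    InfinitesimalIsometry (s.domRestrict f) := by
  intro K hK x
  -- The error `ε = 1 - K⁻¹` is chosen to satisfy both `1 + ε ≤ K` and `(1 - ε)⁻¹ ≤ K`.
  have hone_lt : (1 : ℝ) < K := hK
  have hε : 0 < 1 - (K : ℝ)⁻¹ := sub_pos.2 (inv_lt_one_of_one_lt₀ hone_lt)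
  obtain ⟨f', hf'⟩ := hf x x.2
  obtain ⟨U, hU, herr⟩ := exists_nhds_abs_norm_sub_le hf' hε
  refine ⟨(↑) ⁻¹' U, continuousAt_subtype_val.preimage_mem_nhds hU, fun y hy z hz => ?_⟩
  obtain ⟨hlow, hupp⟩ := abs_le.1 (herr y hy z hz)
  have hlip : ‖f y - f z‖ ≤ K * ‖(y : E) - z‖ := by
    have hsum : 2 - (K : ℝ)⁻¹ ≤ K := by
      field_simp
      nlinarith
    nlinarith [norm_nonneg ((y : E) - z)]
  have hanti : ‖(y : E) - z‖ ≤ K * ‖f y - f z‖ := by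
    rw [← inv_mul_le_iff₀ (by positivity)]
    linarith
  simp only [Set.domRestrict_apply, edist_dist, Subtype.dist_eq, dist_eq_norm,
    ← ENNReal.ofReal_coe_nnreal, ← ENNReal.ofReal_mul K.coe_nonneg]
  exact ⟨ENNReal.ofReal_le_ofReal hlip, ENNReal.ofReal_le_ofReal hanti⟩

variable [MeasurableSpace E] [BorelSpace E] [SecondCountableTopology E] [CompleteSpace E]
  [MeasurableSpace F] [BorelSpace F] {G : Type*} [NormedAddCommGroup G] [NormedSpace ℝ G]

theorem setIntegral_image_hausdorffMeasure {f : E → F} {s : Set E} (hs : MeasurableSet s)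
    (hf : ∀ x ∈ s, ∃ f' : E →ₗᵢ[ℝ] F, HasStrictFDerivAt f f'.toContinuousLinearMap x)
    (hinj : s.InjOn f) {d : ℝ} (hd : 0 ≤ d) (g : F → G) :
    ∫ y in f '' s, g y ∂μH[d] = ∫ x in s, g (f x) ∂μH[d] := by
  have hcont : ContinuousOn f s := fun x hx =>
    let ⟨_, hf'⟩ := hf x hx
    hf'.continuousAt.continuousWithinAt
  calc ∫ y in f '' s, g y ∂μH[d]
      = ∫ x : s, g (f x) ∂μH[d] := by
        rw [← Set.range_domRestrict]
        exact (infinitesimalIsometry_domRestrict hf).setIntegral_range_hausdorffMeasure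
          (hcont.measurableEmbedding hs hinj) hd g
    _ = ∫ x in s, g (f x) ∂μH[d] := by
        have hcoe := (InfinitesimalIsometry.of_isometry
          (isometry_subtype_coe (s := s))).setIntegral_range_hausdorffMeasure
            (MeasurableEmbedding.subtype_coe hs) hd fun x => g (f x)
        rw [← hcoe, Subtype.range_coe]

theorem setIntegral_image_unit_speed {γ γ' : ℝ → F} {s : Set ℝ} (hs : MeasurableSet s)
    (hγ : ∀ t ∈ s, HasStrictDerivAt γ (γ' t) t) (hunit : ∀ t ∈ s, ‖γ' t‖ = 1)
    (hinj : s.InjOn γ) (g : F → G) :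
    ∫ x in γ '' s, g x ∂μH[1] = ∫ t in s, g (γ t) := by
  rw [← hausdorffMeasure_real]
  exact setIntegral_image_hausdorffMeasure hs
    (fun t ht => ⟨LinearIsometry.toSpanSingleton ℝ F (hunit t ht), hγ t ht⟩) hinj zero_le_one g

theorem image_circleMap_div_Ioc (c : ℂ) {r : ℝ} (hr : 0 < r) :
    (fun t => circleMap c r (t / r)) '' Set.Ioc 0 (2 * π * r) = Metric.sphere c r := by
  have hscale : (· / r) '' Set.Ioc 0 (2 * π * r) = Set.Ioc 0 (2 * π) := by
    simp [div_eq_mul_inv, Set.image_mul_right_Ioc _ _ (inv_pos.2 hr), hr.ne']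
  rw [← Set.image_image (circleMap c r) (· / r), hscale, image_circleMap_Ioc, abs_of_pos hr]

theorem injOn_circleMap_div_Ioc (c : ℂ) {r : ℝ} (hr : 0 < r) :
    (Set.Ioc 0 (2 * π * r)).InjOn fun t => circleMap c r (t / r) := by
  intro s hs t ht hst
  have hlt : |s / r - t / r| < 2 * π := by
    rw [← sub_div, abs_div, abs_of_pos hr, div_lt_iff₀ hr, abs_lt]
    constructor <;> linarith [hs.1, hs.2, ht.1, ht.2]
  exact (div_left_inj' hr.ne').1 (eq_of_circleMap_eq hr.ne' hlt hst)

theorem hasStrictDerivAt_circleMap_div (c : ℂ) {r : ℝ} (hr : r ≠ 0) (t : ℝ) :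
    HasStrictDerivAt (fun t => circleMap c r (t / r)) (circleMap 0 1 (t / r) * Complex.I) t := by
  have hcircle : HasStrictDerivAt (circleMap c r) (circleMap 0 r (t / r) * Complex.I) (t / r) := by
    rw [← deriv_circleMap]
    exact (contDiff_circleMap c r (n := 1)).contDiffAt.hasStrictDerivAt one_ne_zero
  have hspeed : circleMap 0 1 (t / r) * Complex.I =
      (1 / r) • (circleMap 0 r (t / r) * Complex.I) := by
    simp [circleMap, hr, ← mul_assoc]
  rw [hspeed]
  exact hcircle.scomp t ((hasStrictDerivAt_id t).div_const r)

theorem setIntegral_sphere_circleMap (c : ℂ) {r : ℝ} (hr : 0 < r) (g : ℂ → G) :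
    ∫ z in Metric.sphere c r, g z ∂μH[1] = r • ∫ θ in 0..2 * π, g (circleMap c r θ) := by
  rw [← image_circleMap_div_Ioc c hr, setIntegral_image_unit_speed measurableSet_Ioc
      (fun t _ => hasStrictDerivAt_circleMap_div c hr.ne' t) (fun t _ => by simp)
      (injOn_circleMap_div_Ioc c hr),
    ← intervalIntegral.integral_of_le (by positivity),
    intervalIntegral.integral_comp_div (fun θ => g (circleMap c r θ)) hr.ne', zero_div,
    mul_div_cancel_right₀ _ hr.ne']

end StrictDerivative

/-- The point of the Euclidean plane with polar coordinates `(r, θ)`. -/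
noncomputable def polarPoint (r θ : ℝ) : E2 := !₂[r * Real.cos θ, r * Real.sin θ]

@[simp]
theorem polarPoint_apply_zero (r θ : ℝ) : polarPoint r θ 0 = r * Real.cos θ := rfl

@[simp]
theorem polarPoint_apply_one (r θ : ℝ) : polarPoint r θ 1 = r * Real.sin θ := rfl

theorem repr_circleMap_zero (r θ : ℝ) :
    Complex.orthonormalBasisOneI.repr (circleMap 0 r θ) = polarPoint r θ := by
  ext i
  rw [Complex.orthonormalBasisOneI_repr_apply, circleMap_zero_re, circleMap_zero_im]
  rfl

theorem norm_polarPoint (r θ : ℝ) : ‖polarPoint r θ‖ = |r| := by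
  rw [← repr_circleMap_zero, LinearIsometryEquiv.norm_map, norm_circleMap_zero]

theorem polarPoint_ne_zero {r : ℝ} (hr : r ≠ 0) (θ : ℝ) : polarPoint r θ ≠ 0 := by
  rwa [← norm_ne_zero_iff, norm_polarPoint, abs_ne_zero]

theorem polarPoint_eq_smul (r θ : ℝ) : polarPoint r θ = r • polarPoint 1 θ := by
  ext i
  fin_cases i <;> simp [polarPoint]

theorem hasDerivAt_polarPoint {r : ℝ} (hr : r ≠ 0) (θ : ℝ) :
    HasDerivAt (fun ρ => polarPoint ρ θ) (r⁻¹ • polarPoint r θ) r := by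
  rw [funext fun ρ => polarPoint_eq_smul ρ θ, polarPoint_eq_smul r, inv_smul_smul₀ hr]
  simpa using (hasDerivAt_id r).smul_const (polarPoint 1 θ)

theorem setIntegral_sphere_polarPoint {F : Type*} [NormedAddCommGroup F] [NormedSpace ℝ F] {r : ℝ}
    (hr : 0 < r) (g : E2 → F) :
    ∫ x in Metric.sphere (0 : E2) r, g x ∂μH[1] = r • ∫ θ in 0..2 * π, g (polarPoint r θ) := by
  let e : ℂ ≃ₗᵢ[ℝ] E2 := Complex.orthonormalBasisOneI.repr
  have hpres := e.toIsometryEquiv.measurePreserving_hausdorffMeasure 1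
  have hemb : MeasurableEmbedding e := e.toHomeomorph.measurableEmbedding
  have hsphere : e ⁻¹' Metric.sphere 0 r = Metric.sphere 0 r := by
    rw [LinearIsometryEquiv.preimage_sphere, map_zero]
  calc ∫ x in Metric.sphere 0 r, g x ∂μH[1]
      = ∫ z in Metric.sphere 0 r, g (e z) ∂μH[1] := by
        rw [← hsphere]
        exact (hpres.setIntegral_preimage_emb hemb g _).symm
    _ = r • ∫ θ in 0..2 * π, g (polarPoint r θ) := by
        simp only [setIntegral_sphere_circleMap 0 hr, e, repr_circleMap_zero]

/-- The trigonometric monomial of frequency `n` with cosine coefficient `c` and sine coefficient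
`d`. Frequencies are integers so that those of a product, `m + n` and `m - n`, are available. -/
noncomputable def fourierMode (n : ℤ) (c d θ : ℝ) : ℝ :=
  c * Real.cos (n * θ) + d * Real.sin (n * θ)

theorem mul_fourierMode (t : ℝ) (n : ℤ) (c d θ : ℝ) :
    t * fourierMode n c d θ = fourierMode n (t * c) (t * d) θ := by
  simp only [fourierMode]
  ring

@[fun_prop]
theorem continuous_fourierMode (n : ℤ) (c d : ℝ) : Continuous (fourierMode n c d) := by
  unfold fourierMode
  fun_prop

theorem fourierMode_mul_fourierMode (m n : ℤ) (c d c' d' θ : ℝ) :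
    fourierMode m c d θ * fourierMode n c' d' θ =
      fourierMode (m + n) ((c * c' - d * d') / 2) ((c * d' + d * c') / 2) θ +
        fourierMode (m - n) ((c * c' + d * d') / 2) ((d * c' - c * d') / 2) θ := by
  simp only [fourierMode, Int.cast_add, Int.cast_sub, add_mul, sub_mul, Real.cos_add, Real.sin_add,
    Real.cos_sub, Real.sin_sub]
  ring

theorem integral_fourierMode (n : ℤ) (c d : ℝ) :
    ∫ θ in 0..2 * π, fourierMode n c d θ = if n = 0 then 2 * π * c else 0 := by
  split_ifs with hn
  · simp [fourierMode, hn]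
  · have hn' : (n : ℝ) ≠ 0 := Int.cast_ne_zero.2 hn
    have hcos : ∫ θ in 0..2 * π, Real.cos (n * θ) = 0 := by
      have hperiod : Real.sin (n * (2 * π)) = 0 := by
        simpa [mul_assoc] using Real.sin_int_mul_pi (n * 2)
      simp [intervalIntegral.integral_comp_mul_left _ hn', hperiod]
    have hsin : ∫ θ in 0..2 * π, Real.sin (n * θ) = 0 := by
      simp [intervalIntegral.integral_comp_mul_left _ hn', Real.cos_int_mul_two_pi]
    unfold fourierMode
    rw [intervalIntegral.integral_add, intervalIntegral.integral_const_mul,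
      intervalIntegral.integral_const_mul, hcos, hsin]
    · ring
    all_goals exact Continuous.intervalIntegrable (by fun_prop) _ _

theorem integral_fourierMode_mul_fourierMode {m n : ℕ} (hm : m ≠ 0) (c d c' d' : ℝ) :
    ∫ θ in 0..2 * π, fourierMode m c d θ * fourierMode n c' d' θ =
      if m = n then π * (c * c' + d * d') else 0 := by
  simp only [fourierMode_mul_fourierMode]
  rw [intervalIntegral.integral_add, integral_fourierMode, integral_fourierMode,
    if_neg (by omega)]
  · simp only [sub_eq_zero, Nat.cast_inj]
    split_ifs <;> ring
  all_goals exact (continuous_fourierMode _ _ _).intervalIntegrable _ _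

section TrigonometricSum

variable {s : Finset ℕ} {c d c' d' : ℕ → ℝ}

theorem integral_sum_fourierMode (hs : 0 ∉ s) :
    ∫ θ in 0..2 * π, ∑ k ∈ s, fourierMode k (c k) (d k) θ = 0 := by
  rw [intervalIntegral.integral_finsetSum fun k _ =>
    (continuous_fourierMode _ _ _).intervalIntegrable _ _]
  refine Finset.sum_eq_zero fun k hk => ?_
  rw [integral_fourierMode, if_neg (Nat.cast_ne_zero.2 (ne_of_mem_of_not_mem hk hs))]

theorem integral_sum_fourierMode_mul_sum (hs : 0 ∉ s) :
    ∫ θ in 0..2 * π, (∑ k ∈ s, fourierMode k (c k) (d k) θ) *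
        ∑ k ∈ s, fourierMode k (c' k) (d' k) θ =
      π * ∑ k ∈ s, (c k * c' k + d k * d' k) := by
  simp only [Finset.sum_mul_sum]
  rw [intervalIntegral.integral_finsetSum fun k _ =>
    Continuous.intervalIntegrable (by fun_prop) _ _, Finset.mul_sum]
  refine Finset.sum_congr rfl fun k hk => ?_
  rw [intervalIntegral.integral_finsetSum fun l _ =>
    Continuous.intervalIntegrable (by fun_prop) _ _]
  simp only [integral_fourierMode_mul_fourierMode (ne_of_mem_of_not_mem hk hs)]
  rw [Finset.sum_ite_eq, if_pos hk]

theorem integral_const_add_sum_fourierMode_mul (hs : 0 ∉ s) (p q : ℝ) :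
    ∫ θ in 0..2 * π, (p + ∑ k ∈ s, fourierMode k (c k) (d k) θ) *
        (q + ∑ k ∈ s, fourierMode k (c' k) (d' k) θ) =
      2 * π * (p * q) + π * ∑ k ∈ s, (c k * c' k + d k * d' k) := by
  simp only [add_mul, mul_add]
  rw [intervalIntegral.integral_add, intervalIntegral.integral_add,
    intervalIntegral.integral_add, intervalIntegral.integral_const_mul,
    intervalIntegral.integral_const_mul, intervalIntegral.integral_mul_const,
    integral_sum_fourierMode hs, integral_sum_fourierMode hs, integral_sum_fourierMode_mul_sum hs]
  · simp only [intervalIntegral.integral_const, smul_eq_mul]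
    ring
  all_goals exact Continuous.intervalIntegrable (by fun_prop) _ _

end TrigonometricSum

section HarmonicExpansion

variable {G : E2 → ℝ} {a A : ℝ} {s : Finset ℕ} {c d : ℕ → ℝ} {r θ : ℝ}

theorem fderiv_radial_of_polar_expansion (hr : 0 < r)
    (hdiff : DifferentiableAt ℝ G (polarPoint r θ))
    (hG : ∀ ρ, 0 < ρ → G (polarPoint ρ θ) =
      a * Real.log ρ + A + ∑ k ∈ s, ρ ^ k * fourierMode k (c k) (d k) θ) :
    r * fderiv ℝ G (polarPoint r θ) (r⁻¹ • polarPoint r θ) =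
      a + ∑ k ∈ s, k * r ^ k * fourierMode k (c k) (d k) θ := by
  have hpow : ∀ k : ℕ, HasDerivAt (fun ρ : ℝ => ρ ^ k) (r⁻¹ * (k * r ^ k)) r := fun k =>
    (hasDerivAt_pow k r).congr_deriv (by cases k <;> simp [pow_succ, field])
  have hexp : HasDerivAt
      (fun ρ => a * Real.log ρ + A + ∑ k ∈ s, ρ ^ k * fourierMode k (c k) (d k) θ)
      (a * r⁻¹ + ∑ k ∈ s, r⁻¹ * (k * r ^ k) * fourierMode k (c k) (d k) θ) r :=
    (((Real.hasDerivAt_log hr.ne').const_mul a).add_const A).add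
      (HasDerivAt.fun_sum fun k _ => (hpow k).mul_const _)
  have hradial := hdiff.hasFDerivAt.comp_hasDerivAt r (hasDerivAt_polarPoint hr.ne' θ)
  rw [hradial.unique (hexp.congr_of_eventuallyEq ((lt_mem_nhds hr).mono hG)), mul_add,
    Finset.mul_sum]
  field_simp

theorem setIntegral_sphere_mul_fderiv_radial (hs : 0 ∉ s) (hr : 0 < r)
    (hdiff : ∀ x, x ≠ 0 → DifferentiableAt ℝ G x)
    (hG : ∀ ρ θ, 0 < ρ → G (polarPoint ρ θ) =
      a * Real.log ρ + A + ∑ k ∈ s, ρ ^ k * fourierMode k (c k) (d k) θ) :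
    ∫ x in Metric.sphere (0 : E2) r, G x * fderiv ℝ G x (r⁻¹ • x) ∂μH[1] =
      2 * π * a * (a * Real.log r + A) +
        π * ∑ k ∈ s, k * r ^ (2 * k) * (c k ^ 2 + d k ^ 2) := by
  have hflux : ∀ θ, r * (G (polarPoint r θ) *
        fderiv ℝ G (polarPoint r θ) (r⁻¹ • polarPoint r θ)) =
      (a * Real.log r + A + ∑ k ∈ s, fourierMode k (r ^ k * c k) (r ^ k * d k) θ) *
        (a + ∑ k ∈ s, fourierMode k (k * r ^ k * c k) (k * r ^ k * d k) θ) := fun θ => by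
    rw [mul_left_comm, hG r θ hr, fderiv_radial_of_polar_expansion hr
      (hdiff _ (polarPoint_ne_zero hr.ne' θ)) fun ρ => hG ρ θ]
    simp only [mul_fourierMode]
  rw [setIntegral_sphere_polarPoint hr, smul_eq_mul, ← intervalIntegral.integral_const_mul]
  simp only [hflux]
  rw [integral_const_add_sum_fourierMode_mul hs]
  congr 1
  · ring
  · congr 1
    exact Finset.sum_congr rfl fun k _ => by ring

end HarmonicExpansion

theorem differentiableAt_of_eq_log_norm_add_quadratic {G : E2 → ℝ} {a A lam ν α β ξ : ℝ}
    (hG : ∀ x : E2, x ≠ 0 →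
      G x = a * Real.log ‖x‖ + A + lam * x 0 + ν * x 1 + α * (x 0) ^ 2 + β * (x 1) ^ 2 +
        ξ * x 0 * x 1) {x : E2} (hx : x ≠ 0) :
    DifferentiableAt ℝ G x := by
  have hlog : DifferentiableAt ℝ (fun y : E2 => Real.log ‖y‖) x :=
    (differentiableAt_id.norm ℝ hx).log (norm_ne_zero_iff.2 hx)
  refine DifferentiableAt.congr_of_eventuallyEq ?_ ((eventually_ne_nhds hx).mono hG)
  fun_prop

/-- exact boundary flux of the Green-type function
`G(x) = a log‖x‖ + A + λ x₁ + ν x₂ + α x₁² + β x₂² + ξ x₁ x₂` (with `α + β = 0`):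
for every `r > 0`,
`∫_{∂B_r(0)} G ∂G/∂n dS = 2π a² log r + 2π a A + π (λ² + ν²) r² + 2π (α² + ξ²/4) r⁴`,
where `dS` is arc-length (one-dimensional Hausdorff) measure on the circle and
`∂G/∂n = fderiv ℝ G x (r⁻¹ • x)` is the outward radial derivative. -/
theorem green_flux_expansion (a A lam ν α β ξ : ℝ) (hαβ : α + β = 0)
    (G : E2 → ℝ)
    (hG : ∀ x : E2, x ≠ 0 →
      G x = a * Real.log ‖x‖ + A + lam * x 0 + ν * x 1 + α * (x 0) ^ 2 + β * (x 1) ^ 2 +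
        ξ * x 0 * x 1) :
    ∀ r : ℝ, 0 < r →
      (∫ x in Metric.sphere (0 : E2) r, G x * fderiv ℝ G x (r⁻¹ • x) ∂μH[1]) =
        2 * π * a ^ 2 * Real.log r + 2 * π * a * A + π * (lam ^ 2 + ν ^ 2) * r ^ 2 +
          2 * π * (α ^ 2 + ξ ^ 2 / 4) * r ^ 4 := by
  intro r hr
  have hpolar : ∀ ρ θ, 0 < ρ → G (polarPoint ρ θ) = a * Real.log ρ + A +
      ∑ k ∈ ({1, 2} : Finset ℕ), ρ ^ k * fourierMode k (if k = 1 then lam else α)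
        (if k = 1 then ν else ξ / 2) θ := by
    intro ρ θ hρ
    rw [hG _ (polarPoint_ne_zero hρ.ne' θ), norm_polarPoint, abs_of_pos hρ,
      eq_neg_of_add_eq_zero_right hαβ]
    simp only [polarPoint_apply_zero, polarPoint_apply_one, fourierMode,
      Finset.sum_pair (show 1 ≠ 2 by decide), ↓reduceIte, OfNat.ofNat_ne_one, Int.cast_natCast,
      Nat.cast_one, Nat.cast_ofNat, one_mul, Real.cos_two_mul', Real.sin_two_mul]
    ring
  rw [setIntegral_sphere_mul_fderiv_radial (by decide) hr
    (fun _ => differentiableAt_of_eq_log_norm_add_quadratic hG) hpolar]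
  simp only [Finset.sum_pair (show 1 ≠ 2 by decide), ↓reduceIte, OfNat.ofNat_ne_one, Nat.cast_one,
    Nat.cast_ofNat]
  ring
end
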